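/- For 0 < q < 1 and integer k ≥ 2, ζ_q(k) = (1−q)^k ∑_{n=1}^∞ C(n, k−1) q^n/(1−q^n), where ζ_q(k) = ∑_{n≥1} q^{n(k−1)}/[n]_q^k. -/

import Mathlib

/-- The generating function of a column of Pascal's triangle, indexed by the positive integers. -/
theorem hasSum_choose_succ_mul_pow_succ (j : ℕ) {r : ℝ} (hr : ‖r‖ < 1) :
    HasSum (fun m : ℕ => ((m + 1).choose (j + 1) : ℝ) * r ^ (m + 1))
      (r ^ (j + 1) / (1 - r) ^ (j + 2)) := by
  have h := (hasSum_choose_mul_geometric_of_norm_lt_one (j + 1) hr).mul_left (r ^ (j + 1))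
  rw [← hasSum_nat_add_iff' j, Finset.sum_eq_zero, sub_zero]
  · rw [mul_one_div] at h
    refine Eq.subst (motive := fun f => HasSum f _) (funext fun m => ?_) h
    rw [add_assoc m j 1, pow_add]
    ring
  · intro m hm
    rw [Nat.choose_eq_zero_of_lt (by simpa using hm), Nat.cast_zero, zero_mul]

/-- The geometric series without its constant term. -/
theorem hasSum_pow_succ {r : ℝ} (hr0 : 0 ≤ r) (hr1 : r < 1) :
    HasSum (fun n : ℕ => r ^ (n + 1)) (r / (1 - r)) := by
  simpa only [pow_succ', div_eq_mul_inv] using (hasSum_geometric_of_lt_one hr0 hr1).mul_left r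

theorem summable_choose_succ_mul_pow_pow (j : ℕ) {q : ℝ} (hq0 : 0 < q) (hq1 : q < 1) :
    Summable (Function.uncurry fun n m : ℕ =>
      ((m + 1).choose (j + 1) : ℝ) * (q ^ (n + 1)) ^ (m + 1)) := by
  have hr1 (n : ℕ) : q ^ (n + 1) < 1 := pow_lt_one₀ hq0.le hq1 n.succ_ne_zero
  have hrow (n : ℕ) := hasSum_choose_succ_mul_pow_succ j (r := q ^ (n + 1))
    (by rw [Real.norm_of_nonneg (by positivity)]; exact hr1 n)
  refine (summable_prod_of_nonneg fun _ => by
    simp only [Function.uncurry, Pi.zero_apply]; positivity).2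
    ⟨fun n => (hrow n).summable, ?_⟩
  simp only [Function.uncurry, (hrow _).tsum_eq]
  have h1q : 0 < 1 - q := sub_pos.2 hq1
  refine ((hasSum_pow_succ hq0.le hq1).summable.div_const ((1 - q) ^ (j + 2))).of_nonneg_of_le
    (fun n => ?_) fun n => ?_
  · have := sub_pos.2 (hr1 n)
    positivity
  · have hle : q ^ (n + 1) ≤ q := pow_le_of_le_one hq0.le hq1.le n.succ_ne_zero
    have hpow : (q ^ (n + 1)) ^ (j + 1) ≤ q ^ (n + 1) :=
      pow_le_of_le_one (by positivity) (hr1 n).le j.succ_ne_zero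
    gcongr

theorem stmt_13 (q : ℝ) (hq0 : 0 < q) (hq1 : q < 1) (k : ℕ) (hk : 2 ≤ k) :
    ∑' n : ℕ, q ^ ((n + 1) * (k - 1)) / (((1 - q ^ (n + 1)) / (1 - q)) ^ k)
      = (1 - q) ^ k *
          ∑' n : ℕ, ((n + 1).choose (k - 1) : ℝ) * q ^ (n + 1) / (1 - q ^ (n + 1)) := by
  obtain ⟨j, rfl⟩ := Nat.exists_eq_add_of_le' hk
  rw [show j + 2 - 1 = j + 1 from rfl]
  have hr1 (n : ℕ) : q ^ (n + 1) < 1 := pow_lt_one₀ hq0.le hq1 n.succ_ne_zero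
  calc
    _ = ∑' n : ℕ, (1 - q) ^ (j + 2) *
        ∑' m : ℕ, ((m + 1).choose (j + 1) : ℝ) * (q ^ (n + 1)) ^ (m + 1) := by
      refine tsum_congr fun n => ?_
      rw [(hasSum_choose_succ_mul_pow_succ j (by
        rw [Real.norm_of_nonneg (by positivity)]; exact hr1 n)).tsum_eq, div_pow, pow_mul,
        div_div_eq_mul_div, mul_comm, mul_div_assoc]
    _ = (1 - q) ^ (j + 2) *
        ∑' m : ℕ, ∑' n : ℕ, ((m + 1).choose (j + 1) : ℝ) * (q ^ (n + 1)) ^ (m + 1) := by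
      rw [tsum_mul_left, (summable_choose_succ_mul_pow_pow j hq0 hq1).tsum_comm]
    _ = _ := by
      congr 1
      refine tsum_congr fun m => ?_
      simp only [pow_right_comm q _ (m + 1)]
      rw [tsum_mul_left, (hasSum_pow_succ (by positivity) (hr1 m)).tsum_eq, mul_div_assoc]
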